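/- There exists an extended Fatou coordinate for P_ω: a surjective map φ : Λ_ω → ℂ, holomorphic on Λ_ω, satisfying φ(P_ω(z)) = 1/q + φ(z) for all z ∈ Λ_ω (hence φ(P_ω^q(z)) = 1 + φ(z)), normalized so that φ(−ω/2) = 0, and whose critical points are exactly the backward orbit of the critical point: for z ∈ Λ_ω, φ′(z) = 0 if and only if there exists n ≥ 0 with P_ω^n(z) = −ω/2. -/

import Mathlib

open Complex Filter Topology Set

/-- The quadratic polynomial `P_ω(z) = ω z + z²`. -/
noncomputable def Pq (ω : ℂ) : ℂ → ℂ := fun z => ω * z + z ^ 2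

/-- The augmented parabolic basin `Λ̃_ω`: points whose orbit converges to `0`. -/
def basinAug (ω : ℂ) : Set ℂ := {z | Tendsto (fun n => (Pq ω)^[n] z) atTop (𝓝 0)}

/-- The backward orbit of the parabolic fixed point `0`. -/
def preFixed (ω : ℂ) : Set ℂ := {z | ∃ n : ℕ, (Pq ω)^[n] z = 0}

/-- The parabolic basin `Λ_ω`. -/
def basin (ω : ℂ) : Set ℂ := basinAug ω \ preFixed ω

/-!
Near a fixed point of multiplier `1`, write `f z = z * (1 + z ^ m * g z)` with `g 0 ≠ 0`. In the
coordinate `w = K / z ^ m`, `K = -1 / (m * g 0)`, each of the `m` attracting petals is a right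
half-plane on which `f` becomes `F w = w + 1 + O(|w| ^ (-1 / m))`. The differences
`F^[n] w - F^[n] a` of two orbits converge, and their limit is a Fatou coordinate of `F` with
derivative close to `1`, so up to adding natural numbers it takes every complex value.

Following orbits until they enter the petals extends the coordinate to the whole basin, its critical
points being the points where some iterate of `f` is critical; surjectivity follows by moving
backwards along `f`.

For `f = P^[q]` the resulting `ψ` satisfies `ψ ∘ P^[q] = ψ + 1`. Since `P` commutes with `f`, its
multiplier `μ` satisfies `μ ^ m = 1`, so `P` changes `K / z ^ m` only to lower order and
`(ψ ∘ P)' = ψ'`. The average `φ` of `ψ ∘ P^[k]` over `k < q` therefore has the same derivative as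
`ψ` and satisfies `φ ∘ P = φ + 1 / q`.
-/

section Filters

theorem tendsto_atTop_of_eventually_add_le_succ {u : ℕ → ℝ} {δ : ℝ} (hδ : 0 < δ)
    (hu : ∀ᶠ n in atTop, u n + δ ≤ u (n + 1)) : Tendsto u atTop atTop := by
  obtain ⟨N, hN⟩ := hu.exists_forall_of_atTop
  have hlower (k : ℕ) : u N + k * δ ≤ u (k + N) := by
    induction k with
    | zero => simp
    | succ k ih =>
      have hstep := hN (k + N) (by omega)
      rw [add_right_comm k 1 N]
      push_cast
      linarith
  refine (tendsto_add_atTop_iff_nat N).1 (tendsto_atTop_mono hlower ?_)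
  exact tendsto_atTop_add_const_left _ _ (tendsto_natCast_atTop_atTop.atTop_mul_const hδ)

theorem eventually_comap_atTop_iff {α : Type*} {u : α → ℝ} {p : α → Prop} :
    (∀ᶠ x in comap u atTop, p x) ↔ ∀ᶠ R in atTop, ∀ x, R < u x → p x := by
  rw [eventually_comap]
  constructor
  · intro h
    obtain ⟨R₀, hR₀⟩ := h.exists_forall_of_atTop
    filter_upwards [eventually_ge_atTop R₀] with R hR x hx
    exact hR₀ (u x) (hR.trans hx.le) x rfl
  · intro h
    obtain ⟨R₀, hR₀⟩ := h.exists
    filter_upwards [eventually_gt_atTop R₀] with R hR x hx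
    exact hR₀ x (hx ▸ hR)

theorem eventually_comap_atTop_eventually_nhds {α : Type*} [TopologicalSpace α] {u : α → ℝ}
    (hu : Continuous u) {p : α → Prop} (hp : ∀ᶠ x in comap u atTop, p x) :
    ∀ᶠ x in comap u atTop, ∀ᶠ y in 𝓝 x, p y := by
  rw [eventually_comap_atTop_iff] at hp ⊢
  filter_upwards [hp] with R hR x hx
  filter_upwards [(isOpen_lt continuous_const hu).mem_nhds hx] with y hy
  exact hR y hy

end Filters

section NearIdentity

theorem half_norm_le_of_norm_sub_le {E : Type*} [SeminormedAddCommGroup E] {a b : E}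
    (hab : ‖a - b‖ ≤ 1 / 2 * ‖b‖) : 1 / 2 * ‖b‖ ≤ ‖a‖ := by
  have := norm_sub_norm_le b a
  rw [norm_sub_rev b a] at this
  linarith

theorem norm_le_two_mul_of_norm_sub_le {E : Type*} [SeminormedAddCommGroup E] {a b : E}
    (hab : ‖a - b‖ ≤ 1 / 2 * ‖b‖) : ‖a‖ ≤ 2 * ‖b‖ := by
  linarith [norm_sub_norm_le a b, norm_nonneg b]

variable {h : ℂ → ℂ}

theorem norm_sub_sub_sub_le_of_norm_deriv_sub_one_le {s : Set ℂ} (hs : Convex ℝ s) {C : ℝ}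
    (hd : ∀ z ∈ s, DifferentiableAt ℂ h z) (hC : ∀ z ∈ s, ‖deriv h z - 1‖ ≤ C)
    {z w : ℂ} (hz : z ∈ s) (hw : w ∈ s) :
    ‖(h z - h w) - (z - w)‖ ≤ C * ‖z - w‖ := by
  have hderiv (x : ℂ) (hx : x ∈ s) :
      HasDerivWithinAt (fun y ↦ h y - y) (deriv h x - 1) s x :=
    ((hd x hx).hasDerivAt.sub (hasDerivAt_id x)).hasDerivWithinAt
  have hmean := hs.norm_image_sub_le_of_norm_hasDerivWithin_le hderiv hC hw hz
  rwa [sub_sub_sub_comm] at hmean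

theorem ball_subset_image_closedBall_of_norm_deriv_sub_one_le {x : ℂ} {r : ℝ} (hr : 0 < r)
    (hd : ∀ z ∈ Metric.closedBall x r, DifferentiableAt ℂ h z)
    (hderiv : ∀ z ∈ Metric.closedBall x r, ‖deriv h z - 1‖ ≤ 1 / 2) :
    Metric.ball (h x) (r / 4) ⊆ h '' Metric.closedBall x r := by
  have hx : x ∈ Metric.closedBall x r := Metric.mem_closedBall_self hr.le
  have hexpand (z : ℂ) (hz : z ∈ Metric.closedBall x r) : 1 / 2 * ‖z - x‖ ≤ ‖h z - h x‖ :=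
    half_norm_le_of_norm_sub_le
      (norm_sub_sub_sub_le_of_norm_deriv_sub_one_le (convex_closedBall x r) hd hderiv hz hx)
  have hcont : DiffContOnCl ℂ h (Metric.ball x r) :=
    DifferentiableOn.diffContOnCl fun z hz ↦
      (hd z (Metric.closure_ball_subset_closedBall hz)).differentiableWithinAt
  have hsphere (z : ℂ) (hz : z ∈ Metric.sphere x r) : r / 2 ≤ ‖h z - h x‖ := by
    have := hexpand z (Metric.sphere_subset_closedBall hz)
    rw [mem_sphere_iff_norm.1 hz] at this
    linarith
  have hne : ∀ᶠ z in 𝓝[≠] x, h z ≠ h x := by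
    filter_upwards [nhdsWithin_le_nhds (Metric.closedBall_mem_nhds x hr), self_mem_nhdsWithin]
      with z hz hzx heq
    have hle := hexpand z hz
    rw [heq, sub_self, norm_zero] at hle
    have : 0 < ‖z - x‖ := norm_pos_iff.2 (sub_ne_zero.2 hzx)
    linarith
  have himage := hcont.ball_subset_image_closedBall hr hsphere
    (hne.frequently.filter_mono nhdsWithin_le_nhds)
  rwa [div_div, show (2 : ℝ) * 2 = 4 by norm_num] at himage

end NearIdentity

/-! ### Near-translations of a half-plane -/

/-- A holomorphic self-map of the half-plane `R < re w` close to the translation `w ↦ w + 1`, with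
derivative so close to `1` that the error, sampled along an orbit whose real part grows by at least
`1 / 2` per step, is bounded by the summable sequence `ε`. -/
structure IsNearTranslation (F : ℂ → ℂ) (R : ℝ) (ε : ℕ → ℝ) : Prop where
  differentiableAt : ∀ ⦃w : ℂ⦄, R < w.re → DifferentiableAt ℂ F w
  norm_sub_le : ∀ ⦃w : ℂ⦄, R < w.re → ‖F w - w - 1‖ ≤ 1 / 2
  tendsto_sub : Tendsto (fun w ↦ F w - w) (comap re atTop) (𝓝 1)
  norm_deriv_sub_one_le : ∀ (n : ℕ) ⦃w : ℂ⦄, R + n / 2 < w.re → ‖deriv F w - 1‖ ≤ ε n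
  summable : Summable ε
  tsum_le : ∑' n, ε n ≤ 1 / 4

/-- The Fatou coordinate of a near-translation `F` of the half-plane `R < re w`: the limit of
`F^[n] w - F^[n] (R + 1)`, written as a telescoping series. -/
noncomputable def fatouCoord (F : ℂ → ℂ) (R : ℝ) (w : ℂ) : ℂ :=
  (w - ↑(R + 1)) +
    ∑' n : ℕ, ((F^[n + 1] w - F^[n + 1] ↑(R + 1)) - (F^[n] w - F^[n] ↑(R + 1)))

namespace IsNearTranslation

variable {F : ℂ → ℂ} {R : ℝ} {ε : ℕ → ℝ} {w w' : ℂ}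

theorem error_nonneg (hF : IsNearTranslation F R ε) (n : ℕ) : 0 ≤ ε n :=
  (norm_nonneg _).trans
    (hF.norm_deriv_sub_one_le n (w := ↑(R + n / 2 + 1)) (by rw [ofReal_re]; linarith))

theorem sum_error_le (hF : IsNearTranslation F R ε) (n : ℕ) :
    ∑ k ∈ Finset.range n, ε k ≤ 1 / 4 :=
  (hF.summable.sum_le_tsum _ fun k _ ↦ hF.error_nonneg k).trans hF.tsum_le

theorem re_add_half_le (hF : IsNearTranslation F R ε) (hw : R < w.re) :
    w.re + 1 / 2 ≤ (F w).re := by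
  have hre := (abs_le.1 ((abs_re_le_norm _).trans (hF.norm_sub_le hw))).1
  simp only [sub_re, one_re] at hre
  linarith

theorem re_add_le_re_iterate (hF : IsNearTranslation F R ε) (hw : R < w.re) (n : ℕ) :
    w.re + n / 2 ≤ (F^[n] w).re := by
  induction n with
  | zero => simp
  | succ n ih =>
    have hR : R < (F^[n] w).re := by
      have : (0 : ℝ) ≤ n / 2 := by positivity
      linarith
    have hstep := hF.re_add_half_le hR
    rw [Function.iterate_succ_apply']
    push_cast
    linarith

theorem lt_re_iterate (hF : IsNearTranslation F R ε) (hw : R < w.re) (n : ℕ) :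
    R + n / 2 < (F^[n] w).re := by
  linarith [hF.re_add_le_re_iterate hw n]

theorem lt_re_iterate_of_lt (hF : IsNearTranslation F R ε) (hw : R < w.re) (n : ℕ) :
    R < (F^[n] w).re := by
  have : (0 : ℝ) ≤ n / 2 := by positivity
  linarith [hF.lt_re_iterate hw n]

theorem differentiableAt_iterate (hF : IsNearTranslation F R ε) (hw : R < w.re) (n : ℕ) :
    DifferentiableAt ℂ F^[n] w := by
  induction n with
  | zero => exact differentiableAt_id
  | succ n ih =>
    rw [Function.iterate_succ']
    exact (hF.differentiableAt (hF.lt_re_iterate_of_lt hw n)).comp w ih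

theorem tendsto_iterate_comap_re (hF : IsNearTranslation F R ε) (hw : R < w.re) :
    Tendsto (fun n ↦ F^[n] w) atTop (comap re atTop) := by
  rw [tendsto_comap_iff]
  refine tendsto_atTop_of_eventually_add_le_succ one_half_pos (.of_forall fun n ↦ ?_)
  simp only [Function.comp_apply, Function.iterate_succ_apply']
  exact hF.re_add_half_le (hF.lt_re_iterate_of_lt hw n)

theorem norm_iterate_succ_sub_le (hF : IsNearTranslation F R ε) (hw : R < w.re) (hw' : R < w'.re)
    (n : ℕ) :
    ‖(F^[n + 1] w - F^[n + 1] w') - (F^[n] w - F^[n] w')‖ ≤ ε n * ‖F^[n] w - F^[n] w'‖ := by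
  have hn : (0 : ℝ) ≤ n / 2 := by positivity
  simp only [Function.iterate_succ_apply']
  exact norm_sub_sub_sub_le_of_norm_deriv_sub_one_le (convex_halfSpace_re_gt (R + n / 2))
    (fun z hz ↦ hF.differentiableAt (by linarith [mem_ofPred_eq ▸ hz]))
    (fun z hz ↦ hF.norm_deriv_sub_one_le n hz) (hF.lt_re_iterate hw n) (hF.lt_re_iterate hw' n)

theorem norm_iterate_sub_sub_le (hF : IsNearTranslation F R ε) (hw : R < w.re) (hw' : R < w'.re)
    (n : ℕ) : ‖(F^[n] w - F^[n] w') - (w - w')‖ ≤ 1 / 2 * ‖w - w'‖ := by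
  have half_le_of_sum_le (k : ℕ)
      (hk : ‖(F^[k] w - F^[k] w') - (w - w')‖ ≤ 2 * (∑ i ∈ Finset.range k, ε i) * ‖w - w'‖) :
      ‖(F^[k] w - F^[k] w') - (w - w')‖ ≤ 1 / 2 * ‖w - w'‖ :=
    hk.trans (by gcongr; linarith [hF.sum_error_le k])
  refine half_le_of_sum_le n ?_
  induction n with
  | zero => simp
  | succ n ih =>
    calc ‖(F^[n + 1] w - F^[n + 1] w') - (w - w')‖
        ≤ ‖(F^[n + 1] w - F^[n + 1] w') - (F^[n] w - F^[n] w')‖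
          + ‖(F^[n] w - F^[n] w') - (w - w')‖ := norm_sub_le_norm_sub_add_norm_sub _ _ _
      _ ≤ ε n * (2 * ‖w - w'‖) + 2 * (∑ i ∈ Finset.range n, ε i) * ‖w - w'‖ := by
          refine add_le_add ((hF.norm_iterate_succ_sub_le hw hw' n).trans ?_) ih
          gcongr
          exacts [hF.error_nonneg n, norm_le_two_mul_of_norm_sub_le (half_le_of_sum_le n ih)]
      _ = 2 * (∑ i ∈ Finset.range (n + 1), ε i) * ‖w - w'‖ := by
          rw [Finset.sum_range_succ]
          ring

theorem norm_iterate_succ_sub_le_mul (hF : IsNearTranslation F R ε) (hw : R < w.re)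
    (hw' : R < w'.re) (n : ℕ) :
    ‖(F^[n + 1] w - F^[n + 1] w') - (F^[n] w - F^[n] w')‖ ≤ ε n * (2 * ‖w - w'‖) := by
  refine (hF.norm_iterate_succ_sub_le hw hw' n).trans ?_
  gcongr
  exacts [hF.error_nonneg n, norm_le_two_mul_of_norm_sub_le (hF.norm_iterate_sub_sub_le hw hw' n)]

theorem norm_deriv_iterate_sub_one_le (hF : IsNearTranslation F R ε) (hw : R < w.re) (n : ℕ) :
    ‖deriv F^[n] w - 1‖ ≤ 1 / 2 := by
  have hderiv : HasDerivAt (fun z ↦ F^[n] z - z) (deriv F^[n] w - 1) w :=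
    (hF.differentiableAt_iterate hw n).hasDerivAt.sub (hasDerivAt_id w)
  refine hderiv.le_of_lip' one_half_pos.le ?_
  filter_upwards [(isOpen_lt continuous_const continuous_re).mem_nhds hw] with z hz
  rw [sub_sub_sub_comm]
  exact hF.norm_iterate_sub_sub_le hz hw n

theorem tendstoUniformlyOn_fatouCoord (hF : IsNearTranslation F R ε) (r : ℝ) :
    TendstoUniformlyOn (fun n w ↦ F^[n] w - F^[n] ↑(R + 1)) (fatouCoord F R) atTop
      ({w | R < w.re} ∩ Metric.ball ↑(R + 1) r) := by
  have hbase : R < ((R + 1 : ℝ) : ℂ).re := by simp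
  have hseries := tendstoUniformlyOn_tsum_nat
    (f := fun n w ↦ (F^[n + 1] w - F^[n + 1] ↑(R + 1)) - (F^[n] w - F^[n] ↑(R + 1)))
    (s := {w | R < w.re} ∩ Metric.ball ↑(R + 1) r) (hF.summable.mul_right (2 * r))
    fun n w hw ↦ (hF.norm_iterate_succ_sub_le_mul hw.1 hbase n).trans <| by
      have := hF.error_nonneg n
      have := (mem_ball_iff_norm.1 hw.2).le
      gcongr
  have hconst : TendstoUniformlyOn (fun (_ : ℕ) (w : ℂ) ↦ w - ↑(R + 1)) (fun w ↦ w - ↑(R + 1))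
      atTop ({w | R < w.re} ∩ Metric.ball ↑(R + 1) r) :=
    fun _ hu ↦ .of_forall fun _ _ _ ↦ refl_mem_uniformity hu
  refine (hconst.add hseries).congr (.of_forall fun n w _ ↦ ?_)
  simp only [Pi.add_apply, Finset.sum_range_sub fun k ↦ F^[k] w - F^[k] ↑(R + 1),
    Function.iterate_zero_apply, add_sub_cancel]

theorem tendstoLocallyUniformlyOn_fatouCoord (hF : IsNearTranslation F R ε) :
    TendstoLocallyUniformlyOn (fun n w ↦ F^[n] w - F^[n] ↑(R + 1)) (fatouCoord F R) atTop
      {w | R < w.re} := by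
  refine tendstoLocallyUniformlyOn_of_forall_exists_nhds fun w hw ↦
    ⟨{w | R < w.re} ∩ Metric.ball ↑(R + 1) (dist w ↑(R + 1) + 1), ?_,
      hF.tendstoUniformlyOn_fatouCoord _⟩
  exact inter_mem self_mem_nhdsWithin
    (nhdsWithin_le_nhds (Metric.isOpen_ball.mem_nhds (Metric.mem_ball.2 (lt_add_one _))))

theorem tendsto_fatouCoord (hF : IsNearTranslation F R ε) (hw : R < w.re) :
    Tendsto (fun n ↦ F^[n] w - F^[n] ↑(R + 1)) atTop (𝓝 (fatouCoord F R w)) :=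
  hF.tendstoLocallyUniformlyOn_fatouCoord.tendsto_at hw

theorem differentiableOn_iterate_sub (hF : IsNearTranslation F R ε) (n : ℕ) :
    DifferentiableOn ℂ (fun w ↦ F^[n] w - F^[n] ↑(R + 1)) {w | R < w.re} :=
  fun _ hw ↦ ((hF.differentiableAt_iterate hw n).sub_const _).differentiableWithinAt

theorem differentiableAt_fatouCoord (hF : IsNearTranslation F R ε) (hw : R < w.re) :
    DifferentiableAt ℂ (fatouCoord F R) w :=
  have hopen := isOpen_lt continuous_const continuous_re
  (hF.tendstoLocallyUniformlyOn_fatouCoord.differentiableOn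
    (.of_forall hF.differentiableOn_iterate_sub) hopen).differentiableAt (hopen.mem_nhds hw)

theorem tendsto_deriv_iterate (hF : IsNearTranslation F R ε) (hw : R < w.re) :
    Tendsto (fun n ↦ deriv F^[n] w) atTop (𝓝 (deriv (fatouCoord F R) w)) := by
  have hlim := (hF.tendstoLocallyUniformlyOn_fatouCoord.deriv
    (.of_forall hF.differentiableOn_iterate_sub)
    (isOpen_lt continuous_const continuous_re)).tendsto_at hw
  simpa only [Function.comp_apply, deriv_sub_const] using hlim

theorem norm_deriv_fatouCoord_sub_one_le (hF : IsNearTranslation F R ε) (hw : R < w.re) :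
    ‖deriv (fatouCoord F R) w - 1‖ ≤ 1 / 2 :=
  le_of_tendsto ((hF.tendsto_deriv_iterate hw).sub_const 1).norm
    (.of_forall (hF.norm_deriv_iterate_sub_one_le hw))

theorem fatouCoord_map (hF : IsNearTranslation F R ε) (hw : R < w.re) :
    fatouCoord F R (F w) = fatouCoord F R w + 1 := by
  have hFw : R < (F w).re := hF.lt_re_iterate_of_lt hw 1
  have hdiff := (hF.tendsto_fatouCoord hFw).sub (hF.tendsto_fatouCoord hw)
  have hone : Tendsto (fun n ↦ F (F^[n] w) - F^[n] w) atTop (𝓝 1) :=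
    hF.tendsto_sub.comp (hF.tendsto_iterate_comap_re hw)
  have heq : fatouCoord F R (F w) - fatouCoord F R w = 1 := by
    refine tendsto_nhds_unique hdiff (hone.congr fun n ↦ ?_)
    rw [sub_sub_sub_cancel_right, ← Function.iterate_succ_apply, Function.iterate_succ_apply']
  rw [← heq, add_sub_cancel]

theorem exists_eq_add_natCast (hF : IsNearTranslation F R ε) {h : ℂ → ℂ}
    (hd : ∀ w : ℂ, R < w.re → DifferentiableAt ℂ h w)
    (hderiv : ∀ w : ℂ, R < w.re → ‖deriv h w - 1‖ ≤ 1 / 2)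
    (hmap : ∀ w : ℂ, R < w.re → h (F w) = h w + 1) (t : ℂ) :
    ∃ n : ℕ, ∃ w : ℂ, R < w.re ∧ h w = t + n := by
  set w₀ : ℂ := ↑(R + 1)
  have hw₀ : R < w₀.re := by simp [w₀]
  have hiter (n : ℕ) : h (F^[n] w₀) = h w₀ + n := by
    induction n with
    | zero => simp
    | succ n ih =>
      rw [Function.iterate_succ_apply', hmap _ (hF.lt_re_iterate_of_lt hw₀ n), ih]
      push_cast
      ring
  obtain ⟨n, hn⟩ := exists_nat_gt (8 * ‖t - h w₀‖)
  have hn₀ : (0 : ℝ) < n := (by positivity : 0 ≤ 8 * ‖t - h w₀‖).trans_lt hn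
  have hball (z : ℂ) (hz : z ∈ Metric.closedBall (F^[n] w₀) (n / 2)) : R < z.re := by
    have hre := (abs_le.1 ((abs_re_le_norm _).trans (mem_closedBall_iff_norm.1 hz))).1
    rw [sub_re] at hre
    linarith [hF.lt_re_iterate hw₀ n]
  have ht : t + n ∈ Metric.ball (h (F^[n] w₀)) (n / 2 / 4) := by
    rw [mem_ball_iff_norm, hiter, add_sub_add_right_eq_sub]
    linarith
  obtain ⟨z, hz, hzt⟩ := ball_subset_image_closedBall_of_norm_deriv_sub_one_le (by positivity)
    (fun z hz ↦ hd z (hball z hz)) (fun z hz ↦ hderiv z (hball z hz)) ht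
  exact ⟨n, z, hball z hz, hzt⟩

end IsNearTranslation

section Decay

variable {F : ℂ → ℂ} {s : ℝ}

theorem summable_rpow_add_half {R : ℝ} (hR : 0 < R) (hs : 0 < s) :
    Summable fun n : ℕ ↦ (R + n / 2) ^ (-(1 + s)) := by
  have hshift := (Real.summable_one_div_nat_add_rpow (2 * R) (1 + s)).2 (by linarith)
  refine (hshift.mul_left (2 ^ (1 + s))).congr fun n ↦ ?_
  rw [abs_of_nonneg (by positivity), show (R + n / 2 : ℝ) = (n + 2 * R) / 2 by ring,
    Real.div_rpow (by positivity) zero_le_two, Real.rpow_neg (by positivity),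
    Real.rpow_neg zero_le_two]
  field_simp

theorem tendsto_tsum_rpow_add_half_atTop (hs : 0 < s) :
    Tendsto (fun R : ℝ ↦ ∑' n : ℕ, (R + n / 2) ^ (-(1 + s))) atTop (𝓝 0) := by
  have hterm (n : ℕ) : Tendsto (fun R : ℝ ↦ (R + n / 2) ^ (-(1 + s))) atTop (𝓝 0) :=
    (tendsto_rpow_neg_atTop (by linarith)).comp (tendsto_atTop_add_const_right _ _ tendsto_id)
  have hlim := tendsto_tsum_of_dominated_convergence (summable_rpow_add_half one_pos hs) hterm <| by
    filter_upwards [eventually_ge_atTop 1] with R hR n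
    rw [Real.norm_of_nonneg (by positivity)]
    exact Real.rpow_le_rpow_of_nonpos (by positivity) (by gcongr) (by linarith)
  rwa [tsum_zero] at hlim

theorem eventually_isNearTranslation_of_isBigO (hs : 0 < s)
    (hd : ∀ᶠ w in comap re atTop, DifferentiableAt ℂ F w)
    (hone : Tendsto (fun w ↦ F w - w) (comap re atTop) (𝓝 1))
    (hderiv : (fun w ↦ deriv F w - 1) =O[comap re atTop] fun w ↦ w.re ^ (-(1 + s))) :
    ∀ᶠ R in atTop, ∃ ε, IsNearTranslation F R ε := by
  obtain ⟨C, hC₀, hC⟩ := hderiv.exists_nonneg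
  have hnear : ∀ᶠ w in comap re atTop, ‖F w - w - 1‖ ≤ 1 / 2 := by
    filter_upwards [hone.eventually (Metric.closedBall_mem_nhds 1 one_half_pos)] with w hw
    exact mem_closedBall_iff_norm.1 hw
  have hsum : ∀ᶠ R : ℝ in atTop, C * ∑' n : ℕ, (R + n / 2) ^ (-(1 + s)) ≤ 1 / 4 :=
    ((tendsto_tsum_rpow_add_half_atTop hs).const_mul C).eventually_le_const (by norm_num)
  filter_upwards [eventually_comap_atTop_iff.1 hd, eventually_comap_atTop_iff.1 hnear,
    eventually_comap_atTop_iff.1 hC.bound, hsum, eventually_gt_atTop 0]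
    with R hdR hnearR hCR hsumR hR
  refine ⟨fun n ↦ C * (R + n / 2) ^ (-(1 + s)), hdR, hnearR, hone, fun n w hw ↦ ?_,
    (summable_rpow_add_half hR hs).mul_left C, by rwa [tsum_mul_left]⟩
  have hn : (0 : ℝ) ≤ n / 2 := by positivity
  refine (hCR w (by linarith)).trans (mul_le_mul_of_nonneg_left ?_ hC₀)
  rw [Real.norm_of_nonneg (Real.rpow_nonneg (by linarith) _)]
  exact Real.rpow_le_rpow_of_nonpos (by linarith) hw.le (by linarith)

theorem norm_cpow_neg_le_re_rpow (hs : 0 ≤ s) {w : ℂ} (hw : 0 < w.re) :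
    ‖w ^ ((-s : ℝ) : ℂ)‖ ≤ w.re ^ (-s) := by
  rw [norm_cpow_real]
  exact Real.rpow_le_rpow_of_nonpos hw (re_le_norm w) (by linarith)

theorem tendsto_cpow_neg_comap_re (hs : 0 < s) :
    Tendsto (fun w : ℂ ↦ w ^ ((-s : ℝ) : ℂ)) (comap re atTop) (𝓝 0) := by
  refine squeeze_zero_norm' ?_ ((tendsto_rpow_neg_atTop hs).comp tendsto_comap)
  filter_upwards [tendsto_comap.eventually (eventually_gt_atTop 0)] with w hw
  exact norm_cpow_neg_le_re_rpow hs.le hw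

theorem eventually_isNearTranslation_of_analyticAt (hs : 0 < s) {E : ℂ → ℂ}
    (hE : AnalyticAt ℂ E 0) (hE₀ : E 0 = 0) (c : ℂ)
    (hF : ∀ᶠ w in comap re atTop, F w = w + 1 + E (c * w ^ ((-s : ℝ) : ℂ))) :
    ∀ᶠ R in atTop, ∃ ε, IsNearTranslation F R ε := by
  have hσ : Tendsto (fun w : ℂ ↦ c * w ^ ((-s : ℝ) : ℂ)) (comap re atTop) (𝓝 0) := by
    simpa using (tendsto_cpow_neg_comap_re hs).const_mul c
  have hpos : ∀ᶠ w : ℂ in comap re atTop, 0 < w.re :=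
    tendsto_comap.eventually (eventually_gt_atTop 0)
  have hderiv : ∀ᶠ w in comap re atTop,
      HasDerivAt F (1 + deriv E (c * w ^ ((-s : ℝ) : ℂ)) *
        (c * (((-s : ℝ) : ℂ) * w ^ (((-(1 + s) : ℝ)) : ℂ)))) w := by
    filter_upwards [eventually_comap_atTop_eventually_nhds continuous_re hF, hpos,
      hσ.eventually hE.eventually_analyticAt] with w hFw hw hEw
    have hcpow := ((hasDerivAt_id w).cpow_const (c := ((-s : ℝ) : ℂ)) (Or.inl hw)).const_mul c
    rw [mul_one, show ((-s : ℝ) : ℂ) - 1 = ((-(1 + s) : ℝ) : ℂ) by push_cast; ring] at hcpow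
    exact (((hasDerivAt_id w).add_const 1).add
      (hEw.differentiableAt.hasDerivAt.comp w hcpow)).congr_of_eventuallyEq hFw
  refine eventually_isNearTranslation_of_isBigO hs (hderiv.mono fun _ hw ↦ hw.differentiableAt)
    ?_ ?_
  · have hlim := (hE.continuousAt.tendsto.comp hσ).const_add 1
    rw [hE₀, add_zero] at hlim
    refine hlim.congr' ?_
    filter_upwards [hF] with w hw
    rw [hw, Function.comp_apply]
    ring
  · have hbound := (hE.deriv.continuousAt.tendsto.comp hσ).isBigO_one ℝ
    have hcpow : (fun w : ℂ ↦ c * (((-s : ℝ) : ℂ) * w ^ (((-(1 + s) : ℝ)) : ℂ)))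
        =O[comap re atTop] fun w ↦ w.re ^ (-(1 + s)) := by
      refine (Asymptotics.IsBigO.const_mul_left (.of_bound 1 ?_) _).const_mul_left c
      filter_upwards [hpos] with w hw
      rw [Real.norm_of_nonneg (by positivity), one_mul]
      exact norm_cpow_neg_le_re_rpow (by linarith) hw
    refine (hbound.mul hcpow).congr' ?_ (.of_forall fun w ↦ one_mul _)
    filter_upwards [hderiv] with w hw
    rw [hw.deriv, add_sub_cancel_left, Function.comp_apply]

end Decay

/-! ### Attracting petals -/

section PetalCoordinates

/-- The coordinate `K / z ^ m` near the fixed point `0`, which it sends to infinity. For the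
appropriate constant `K` it turns a parabolic germ into a perturbation of `w ↦ w + 1`. -/
noncomputable def invCoord (K : ℂ) (m : ℕ) (z : ℂ) : ℂ := K / z ^ m

/-- The inverse branch of `invCoord K m` on the right half-plane attached to an `m`-th root `c`
of `K`; it parametrizes one attracting petal. -/
noncomputable def petalParam (m : ℕ) (c w : ℂ) : ℂ := c / w ^ (m : ℂ)⁻¹

/-- The `m`-th root of `K` attached to the attracting petal that contains `z`. -/
noncomputable def petalLabel (K : ℂ) (m : ℕ) (z : ℂ) : ℂ := z * invCoord K m z ^ (m : ℂ)⁻¹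

/-- The union of the `m` attracting petals at `0` cut out by `R < re (K / z ^ m)`. -/
def petals (K : ℂ) (m : ℕ) (R : ℝ) : Set ℂ := {z | R < (invCoord K m z).re}

variable {K c z w : ℂ} {m : ℕ} {R : ℝ}

theorem ne_zero_of_mem_petals (hm : m ≠ 0) (hR : 0 ≤ R) (hz : z ∈ petals K m R) : z ≠ 0 := by
  rintro rfl
  simp only [petals, mem_ofPred_eq, invCoord, zero_pow hm, div_zero, zero_re] at hz
  linarith

theorem ne_zero_of_lt_re (hR : 0 ≤ R) (hw : R < w.re) : w ≠ 0 := by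
  rintro rfl
  exact hR.not_gt hw

theorem comap_re_invCoord_le (hm : m ≠ 0) :
    comap (fun z ↦ (invCoord K m z).re) atTop ≤ 𝓝[≠] 0 := by
  refine le_inf (Metric.nhds_basis_ball.ge_iff.2 fun δ hδ ↦ ?_) (le_principal_iff.2 ?_)
  · refine eventually_comap_atTop_iff.2 ?_
    filter_upwards [eventually_ge_atTop (‖K‖ / δ ^ m)] with R hR z hz
    rw [dist_zero_right]
    by_contra! hδz
    have : (invCoord K m z).re ≤ ‖K‖ / δ ^ m :=
      calc (invCoord K m z).re ≤ ‖invCoord K m z‖ := re_le_norm _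
        _ = ‖K‖ / ‖z‖ ^ m := by rw [invCoord, norm_div, norm_pow]
        _ ≤ ‖K‖ / δ ^ m := by gcongr
    linarith
  · refine eventually_comap_atTop_iff.2 ?_
    filter_upwards [eventually_ge_atTop 0] with R hR z hz
    exact ne_zero_of_mem_petals hm hR hz

theorem hasDerivAt_invCoord (hz : z ≠ 0) :
    HasDerivAt (invCoord K m) (-(K * m) / z ^ (m + 1)) z := by
  refine ((hasDerivAt_const z K).fun_div (hasDerivAt_pow m z) (pow_ne_zero m hz)).congr_deriv ?_
  cases m with
  | zero => simp
  | succ k =>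
    rw [Nat.add_sub_cancel]
    field_simp
    ring

theorem isOpen_petals (hm : m ≠ 0) (hR : 0 ≤ R) : IsOpen (petals K m R) := by
  refine isOpen_iff_mem_nhds.2 fun z hz ↦ ?_
  have hcont := (hasDerivAt_invCoord (K := K) (m := m)
    (ne_zero_of_mem_petals hm hR hz)).continuousAt
  exact (continuous_re.continuousAt.comp hcont).eventually (lt_mem_nhds hz)

theorem petalParam_petalLabel (hK : K ≠ 0) (hz : z ≠ 0) :
    petalParam m (petalLabel K m z) (invCoord K m z) = z := by
  have hne : invCoord K m z ^ (m : ℂ)⁻¹ ≠ 0 :=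
    cpow_ne_zero_iff.2 (.inl (div_ne_zero hK (pow_ne_zero m hz)))
  rw [petalParam, petalLabel, mul_div_cancel_right₀ _ hne]

theorem petalLabel_pow (hm : m ≠ 0) (hz : z ≠ 0) : petalLabel K m z ^ m = K := by
  rw [petalLabel, mul_pow, cpow_nat_inv_pow _ hm, invCoord, mul_div_cancel₀ _ (pow_ne_zero m hz)]

theorem invCoord_petalParam (hm : m ≠ 0) (hK : K ≠ 0) (hc : c ^ m = K) :
    invCoord K m (petalParam m c w) = w := by
  rw [invCoord, petalParam, div_pow, hc, cpow_nat_inv_pow _ hm, div_div_cancel₀ hK]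

theorem petalLabel_petalParam (hm : m ≠ 0) (hK : K ≠ 0) (hc : c ^ m = K) (hw : w ≠ 0) :
    petalLabel K m (petalParam m c w) = c := by
  rw [petalLabel, invCoord_petalParam hm hK hc, petalParam,
    div_mul_cancel₀ _ (cpow_ne_zero_iff.2 (.inl hw))]

theorem differentiableAt_petalParam (hw : 0 < w.re) :
    DifferentiableAt ℂ (petalParam m c) w :=
  (differentiableAt_const c).div (differentiableAt_id.cpow_const (Or.inl hw))
    (cpow_ne_zero_iff.2 (.inl (ne_zero_of_lt_re le_rfl hw)))

theorem tendsto_petalParam (hm : m ≠ 0) (hK : K ≠ 0) (hc : c ^ m = K) :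
    Tendsto (petalParam m c) (comap re atTop) (𝓝[≠] 0) := by
  refine Tendsto.mono_right ?_ (comap_re_invCoord_le (K := K) hm)
  simp only [tendsto_comap_iff, Function.comp_def, invCoord_petalParam hm hK hc]
  exact tendsto_comap

theorem finite_pow_eq (hm : m ≠ 0) (K : ℂ) : {c : ℂ | c ^ m = K}.Finite := by
  refine (Polynomial.nthRoots m K).toFinset.finite_toSet.subset fun c hc ↦ ?_
  simpa [Polynomial.mem_nthRoots (Nat.pos_of_ne_zero hm)] using hc

theorem eventually_petalLabel_eq (hm : m ≠ 0) (hR : 0 ≤ R) (hz : z ∈ petals K m R) :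
    ∀ᶠ y in 𝓝 z, petalLabel K m y = petalLabel K m z := by
  have hcont : ContinuousAt (petalLabel K m) z :=
    continuousAt_id.mul
      ((hasDerivAt_invCoord (ne_zero_of_mem_petals hm hR hz)).continuousAt.cpow
        continuousAt_const (Or.inl (hR.trans_lt hz)))
  have hfin : ({c : ℂ | c ^ m = K} \ {petalLabel K m z}).Finite := (finite_pow_eq hm K).sdiff
  filter_upwards [hcont.eventually (hfin.isClosed.isOpen_compl.mem_nhds fun h ↦ h.2 rfl),
    (isOpen_petals hm hR).mem_nhds hz] with y hy hyR
  by_contra hne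
  exact hy ⟨petalLabel_pow hm (ne_zero_of_mem_petals hm hR hyR), hne⟩

end PetalCoordinates

/-- A germ `f z = z * (1 + z ^ m * g z)` at a fixed point `0` with multiplier `1`, where `g` is
analytic and `g 0 ≠ 0`. The leading coefficient is recorded through `K = -1 / (m * g 0)`, the
constant for which `invCoord K m` conjugates `f` to `w ↦ w + 1 + o(1)`. -/
structure IsParabolicGerm (f : ℂ → ℂ) (m : ℕ) (K : ℂ) : Prop where
  multiplicity_ne_zero : m ≠ 0
  coeff_ne_zero : K ≠ 0
  exists_eq_mul : ∃ g : ℂ → ℂ, AnalyticAt ℂ g 0 ∧ g 0 = -1 / (m * K) ∧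
    ∀ᶠ z in 𝓝 0, f z = z * (1 + z ^ m * g z)

/-- The expression of `f` in the coordinate `invCoord K m`, along the branch with label `c`. -/
noncomputable def petalMap (f : ℂ → ℂ) (K : ℂ) (m : ℕ) (c w : ℂ) : ℂ :=
  invCoord K m (f (petalParam m c w))

/-- The basin of the fixed point `0` without the backward orbit of `0`: the points whose orbit
converges to `0` and is eventually nonzero. -/
def parabolicBasin (f : ℂ → ℂ) : Set ℂ := {z | Tendsto (fun n ↦ f^[n] z) atTop (𝓝[≠] 0)}

/-- `R` is large enough for the petals `petals K m R` to absorb every orbit of the parabolic basin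
and to be invariant, with `f` acting on each of them as a near-translation in the coordinate
`invCoord K m`. -/
structure IsPetalRadius (f : ℂ → ℂ) (K : ℂ) (m : ℕ) (R : ℝ) : Prop where
  multiplicity_ne_zero : m ≠ 0
  coeff_ne_zero : K ≠ 0
  nonneg : 0 ≤ R
  eventually_iterate_mem : ∀ ⦃z⦄, z ∈ parabolicBasin f → ∀ᶠ n in atTop, f^[n] z ∈ petals K m R
  petalLabel_map : ∀ ⦃z⦄, z ∈ petals K m R → petalLabel K m (f z) = petalLabel K m z
  exists_isNearTranslation : ∀ ⦃c⦄, c ^ m = K → ∃ ε, IsNearTranslation (petalMap f K m c) R ε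

theorem eventually_nhds_one_cpow_inv_mul {m : ℕ} (hm : m ≠ 0) :
    ∀ᶠ v in 𝓝 (1 : ℂ), ∀ y : ℂ, 0 < y.re → (y / v ^ m) ^ (m : ℂ)⁻¹ * v = y ^ (m : ℂ)⁻¹ := by
  have harg : Tendsto arg (𝓝 1) (𝓝 0) := by
    simpa using (continuousAt_arg (x := 1) (by simp)).tendsto
  have hinv : Tendsto (fun v : ℂ ↦ v⁻¹) (𝓝 1) (𝓝 1) := by
    simpa using (continuousAt_inv₀ (one_ne_zero (α := ℂ))).tendsto
  have hinv_pow : Tendsto (fun v : ℂ ↦ v⁻¹ ^ m) (𝓝 1) (𝓝 1) := by simpa using hinv.pow m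
  have hpi : 0 < Real.pi / m := by positivity
  filter_upwards [(harg.comp hinv).eventually (Ioo_mem_nhds (neg_lt_zero.2 hpi) hpi),
    (harg.comp hinv_pow).eventually
      (Ioo_mem_nhds (neg_lt_zero.2 Real.pi_div_two_pos) Real.pi_div_two_pos),
    eventually_ne_nhds one_ne_zero]
    with v (harg_inv : arg v⁻¹ ∈ Ioo _ _) (harg_pow : arg (v⁻¹ ^ m) ∈ Ioo _ _) hv y hy
  have hy₀ : y ≠ 0 := ne_zero_of_lt_re le_rfl hy
  have hvm : v⁻¹ ^ m ≠ 0 := pow_ne_zero _ (inv_ne_zero hv)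
  have harg_y := abs_lt.1 (abs_arg_lt_pi_div_two_iff.2 (Or.inl hy))
  have hlog : log (y * v⁻¹ ^ m) = log y + log (v⁻¹ ^ m) :=
    (log_mul_eq_add_log_iff hy₀ hvm).2
      ⟨by linarith [harg_pow.1, harg_y.1], by linarith [harg_pow.2, harg_y.2]⟩
  rw [div_eq_mul_inv, ← inv_pow, cpow_def_of_ne_zero (mul_ne_zero hy₀ hvm), hlog, add_mul,
    exp_add, ← cpow_def_of_ne_zero hy₀, ← cpow_def_of_ne_zero hvm,
    pow_cpow_nat_inv hm harg_inv.1 harg_inv.2.le, mul_assoc, inv_mul_cancel₀ hv, mul_one]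

namespace IsParabolicGerm

variable {f : ℂ → ℂ} {m : ℕ} {K : ℂ}

theorem exists_invCoord_map_eq (hf : IsParabolicGerm f m K) :
    ∃ E : ℂ → ℂ, AnalyticAt ℂ E 0 ∧ E 0 = 0 ∧
      ∀ᶠ z in 𝓝[≠] 0, invCoord K m (f z) = invCoord K m z + 1 + E z := by
  obtain ⟨g, hg, hg₀, hfg⟩ := hf.exists_eq_mul
  have hm := hf.multiplicity_ne_zero
  have hK := hf.coeff_ne_zero
  have hgeom_analytic : AnalyticAt ℂ (fun z ↦ ∑ i ∈ Finset.range m, (1 + z ^ m * g z) ^ i) 0 :=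
    Finset.analyticAt_fun_sum _ fun i _ ↦ by fun_prop
  refine ⟨fun z ↦ -K * g z * (∑ i ∈ Finset.range m, (1 + z ^ m * g z) ^ i) /
    (1 + z ^ m * g z) ^ m - 1, ?_, ?_, ?_⟩
  · refine (((analyticAt_const.mul hg).mul hgeom_analytic).div (by fun_prop) ?_).sub
      analyticAt_const
    simp [hm]
  · have hm' : (m : ℂ) ≠ 0 := Nat.cast_ne_zero.2 hm
    simp only [ne_eq, hm, not_false_eq_true, zero_pow, zero_mul, add_zero, one_pow,
      Finset.sum_const, Finset.card_range, nsmul_eq_mul, mul_one, div_one, hg₀]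
    field_simp
    ring
  · have hne : ∀ᶠ z in 𝓝 0, 1 + z ^ m * g z ≠ 0 :=
      ContinuousAt.eventually_ne (by fun_prop) (by simp [hm])
    filter_upwards [nhdsWithin_le_nhds hne, nhdsWithin_le_nhds hfg, self_mem_nhdsWithin]
      with z hz hfz (hz₀ : z ≠ 0)
    have hgeom := geom_sum_mul (1 + z ^ m * g z) m
    have hpow := pow_ne_zero m hz
    have hzm := pow_ne_zero m hz₀
    simp only [invCoord, hfz, mul_pow]
    field_simp
    linear_combination K * hgeom

theorem eventually_re_invCoord_add_half_le (hf : IsParabolicGerm f m K) :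
    ∀ᶠ z in 𝓝[≠] 0, (invCoord K m z).re + 1 / 2 ≤ (invCoord K m (f z)).re := by
  obtain ⟨E, hE, hE₀, hfE⟩ := hf.exists_invCoord_map_eq
  have hsmall : ∀ᶠ z in 𝓝 0, ‖E z‖ < 1 / 2 :=
    hE.continuousAt.norm.eventually_lt_const (by simp [hE₀])
  filter_upwards [hfE, nhdsWithin_le_nhds hsmall] with z hz hEz
  have hre := (abs_le.1 ((abs_re_le_norm (E z)).trans hEz.le)).1
  rw [hz, add_re, add_re, one_re]
  linarith

theorem tendsto_re_invCoord_iterate (hf : IsParabolicGerm f m K) {z : ℂ}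
    (hz : z ∈ parabolicBasin f) :
    Tendsto (fun n ↦ (invCoord K m (f^[n] z)).re) atTop atTop := by
  refine tendsto_atTop_of_eventually_add_le_succ one_half_pos ?_
  filter_upwards [Tendsto.eventually hz hf.eventually_re_invCoord_add_half_le] with n hn
  rwa [Function.iterate_succ_apply']

theorem eventually_petalLabel_map (hf : IsParabolicGerm f m K) :
    ∀ᶠ z in 𝓝[≠] 0, 0 < (invCoord K m z).re → petalLabel K m (f z) = petalLabel K m z := by
  obtain ⟨g, hg, -, hfg⟩ := hf.exists_eq_mul
  have hm := hf.multiplicity_ne_zero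
  have hfactor : Tendsto (fun z ↦ 1 + z ^ m * g z) (𝓝 0) (𝓝 1) := by
    have hcont : ContinuousAt (fun z ↦ 1 + z ^ m * g z) 0 := by fun_prop
    simpa [hm] using hcont.tendsto
  filter_upwards [nhdsWithin_le_nhds hfg,
    nhdsWithin_le_nhds (hfactor.eventually (eventually_nhds_one_cpow_inv_mul hm))]
    with z hfz hbranch hre
  have hmap : invCoord K m (f z) = invCoord K m z / (1 + z ^ m * g z) ^ m := by
    rw [invCoord, hfz, mul_pow, ← div_div, invCoord]
  rw [petalLabel, petalLabel, ← hbranch _ hre, hmap, hfz]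
  ring

theorem eventually_petalMap_isNearTranslation (hf : IsParabolicGerm f m K) {c : ℂ}
    (hc : c ^ m = K) : ∀ᶠ R in atTop, ∃ ε, IsNearTranslation (petalMap f K m c) R ε := by
  obtain ⟨E, hE, hE₀, hfE⟩ := hf.exists_invCoord_map_eq
  have hm := hf.multiplicity_ne_zero
  have hK := hf.coeff_ne_zero
  refine eventually_isNearTranslation_of_analyticAt (s := (m : ℝ)⁻¹) (by positivity) hE hE₀ c ?_
  filter_upwards [(tendsto_petalParam hm hK hc).eventually hfE] with w hw
  rw [petalMap, hw, invCoord_petalParam hm hK hc, petalParam, ofReal_neg, cpow_neg, ofReal_inv,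
    ofReal_natCast, div_eq_mul_inv]

theorem eventually_isPetalRadius (hf : IsParabolicGerm f m K) :
    ∀ᶠ R in atTop, IsPetalRadius f K m R := by
  have hm := hf.multiplicity_ne_zero
  filter_upwards [eventually_ge_atTop 0,
    eventually_comap_atTop_iff.1 (comap_re_invCoord_le hm hf.eventually_petalLabel_map),
    (eventually_all_finite (finite_pow_eq hm K)).2
      fun _ hc ↦ hf.eventually_petalMap_isNearTranslation hc] with R hR hlabel hnear
  exact ⟨hm, hf.coeff_ne_zero, hR,
    fun z hz ↦ (hf.tendsto_re_invCoord_iterate hz).eventually_gt_atTop R,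
    fun z hz ↦ hlabel z hz (hR.trans_lt hz), hnear⟩

end IsParabolicGerm

/-- The Fatou coordinate of `f` on its attracting petals: on the petal with label `c`, the Fatou
coordinate of the near-translation `petalMap f K m c` read in the coordinate `invCoord K m`. -/
noncomputable def petalFatouCoord (f : ℂ → ℂ) (K : ℂ) (m : ℕ) (R : ℝ) (z : ℂ) : ℂ :=
  fatouCoord (petalMap f K m (petalLabel K m z)) R (invCoord K m z)

namespace IsPetalRadius

variable {f : ℂ → ℂ} {K c z w : ℂ} {m : ℕ} {R : ℝ}

theorem ne_zero (hR : IsPetalRadius f K m R) (hz : z ∈ petals K m R) : z ≠ 0 :=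
  ne_zero_of_mem_petals hR.multiplicity_ne_zero hR.nonneg hz

theorem exists_isNearTranslation_petalLabel (hR : IsPetalRadius f K m R)
    (hz : z ∈ petals K m R) : ∃ ε, IsNearTranslation (petalMap f K m (petalLabel K m z)) R ε :=
  hR.exists_isNearTranslation (petalLabel_pow hR.multiplicity_ne_zero (hR.ne_zero hz))

theorem petalMap_invCoord (hR : IsPetalRadius f K m R) (hz : z ∈ petals K m R) :
    petalMap f K m (petalLabel K m z) (invCoord K m z) = invCoord K m (f z) := by
  rw [petalMap, petalParam_petalLabel hR.coeff_ne_zero (hR.ne_zero hz)]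

theorem mapsTo (hR : IsPetalRadius f K m R) : MapsTo f (petals K m R) (petals K m R) := by
  intro z hz
  obtain ⟨ε, hF⟩ := hR.exists_isNearTranslation_petalLabel hz
  have hstep := hF.lt_re_iterate_of_lt hz 1
  rwa [Function.iterate_one, hR.petalMap_invCoord hz] at hstep

theorem iterate_petalMap_invCoord (hR : IsPetalRadius f K m R) (hz : z ∈ petals K m R) (n : ℕ) :
    (petalMap f K m (petalLabel K m z))^[n] (invCoord K m z) = invCoord K m (f^[n] z) := by
  induction n generalizing z with
  | zero => rfl
  | succ n ih =>
    rw [Function.iterate_succ_apply, Function.iterate_succ_apply, hR.petalMap_invCoord hz,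
      ← hR.petalLabel_map hz, ih (hR.mapsTo hz)]

theorem petals_subset_parabolicBasin (hR : IsPetalRadius f K m R) :
    petals K m R ⊆ parabolicBasin f := by
  intro z hz
  obtain ⟨ε, hF⟩ := hR.exists_isNearTranslation_petalLabel hz
  have hlim := hF.tendsto_iterate_comap_re hz
  rw [tendsto_comap_iff] at hlim
  refine Tendsto.mono_right ?_ (comap_re_invCoord_le (K := K) hR.multiplicity_ne_zero)
  rw [tendsto_comap_iff]
  simpa only [Function.comp_def, hR.iterate_petalMap_invCoord hz] using hlim

theorem hasDerivAt_petalFatouCoord (hR : IsPetalRadius f K m R) (hz : z ∈ petals K m R) :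
    HasDerivAt (petalFatouCoord f K m R)
      (deriv (fatouCoord (petalMap f K m (petalLabel K m z)) R) (invCoord K m z) *
        (-(K * m) / z ^ (m + 1))) z := by
  obtain ⟨ε, hF⟩ := hR.exists_isNearTranslation_petalLabel hz
  refine ((hF.differentiableAt_fatouCoord hz).hasDerivAt.comp z
    (hasDerivAt_invCoord (hR.ne_zero hz))).congr_of_eventuallyEq ?_
  filter_upwards [eventually_petalLabel_eq hR.multiplicity_ne_zero hR.nonneg hz] with y hy
  rw [petalFatouCoord, hy, Function.comp_apply]

theorem deriv_petalFatouCoord_ne_zero (hR : IsPetalRadius f K m R) (hz : z ∈ petals K m R) :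
    deriv (petalFatouCoord f K m R) z ≠ 0 := by
  obtain ⟨ε, hF⟩ := hR.exists_isNearTranslation_petalLabel hz
  rw [(hR.hasDerivAt_petalFatouCoord hz).deriv]
  refine mul_ne_zero (fun hzero ↦ ?_) (div_ne_zero (neg_ne_zero.2 (mul_ne_zero hR.coeff_ne_zero
    (Nat.cast_ne_zero.2 hR.multiplicity_ne_zero))) (pow_ne_zero _ (hR.ne_zero hz)))
  have hnear := hF.norm_deriv_fatouCoord_sub_one_le hz
  rw [hzero] at hnear
  norm_num at hnear

theorem petalFatouCoord_map (hR : IsPetalRadius f K m R) (hz : z ∈ petals K m R) :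
    petalFatouCoord f K m R (f z) = petalFatouCoord f K m R z + 1 := by
  obtain ⟨ε, hF⟩ := hR.exists_isNearTranslation_petalLabel hz
  rw [petalFatouCoord, petalFatouCoord, hR.petalLabel_map hz, ← hR.petalMap_invCoord hz,
    hF.fatouCoord_map hz]

theorem tendsto_deriv_invCoord_iterate (hR : IsPetalRadius f K m R) (hz : z ∈ petals K m R) :
    Tendsto (fun n ↦ deriv (fun y ↦ invCoord K m (f^[n] y)) z) atTop
      (𝓝 (deriv (petalFatouCoord f K m R) z)) := by
  obtain ⟨ε, hF⟩ := hR.exists_isNearTranslation_petalLabel hz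
  rw [(hR.hasDerivAt_petalFatouCoord hz).deriv]
  refine ((hF.tendsto_deriv_iterate hz).mul_const _).congr fun n ↦ ?_
  rw [← ((hF.differentiableAt_iterate hz n).hasDerivAt.comp z
    (hasDerivAt_invCoord (hR.ne_zero hz))).deriv]
  refine EventuallyEq.deriv_eq ?_
  filter_upwards [eventually_petalLabel_eq hR.multiplicity_ne_zero hR.nonneg hz,
    (isOpen_petals hR.multiplicity_ne_zero hR.nonneg).mem_nhds hz] with y hy hyR
  rw [Function.comp_apply, ← hy, hR.iterate_petalMap_invCoord hyR]

theorem petalParam_mem (hR : IsPetalRadius f K m R) (hc : c ^ m = K) (hw : R < w.re) :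
    petalParam m c w ∈ petals K m R := by
  rwa [petals, mem_ofPred_eq, invCoord_petalParam hR.multiplicity_ne_zero hR.coeff_ne_zero hc]

theorem petalParam_petalMap (hR : IsPetalRadius f K m R) (hc : c ^ m = K) (hw : R < w.re) :
    petalParam m c (petalMap f K m c w) = f (petalParam m c w) := by
  have hmem := hR.petalParam_mem hc hw
  have hlabel : petalLabel K m (f (petalParam m c w)) = c := by
    rw [hR.petalLabel_map hmem, petalLabel_petalParam hR.multiplicity_ne_zero hR.coeff_ne_zero hc
      (ne_zero_of_lt_re hR.nonneg hw)]
  have hinv := petalParam_petalLabel (m := m) hR.coeff_ne_zero (hR.ne_zero (hR.mapsTo hmem))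
  rwa [hlabel] at hinv

theorem petalFatouCoord_petalParam (hR : IsPetalRadius f K m R) (hc : c ^ m = K)
    (hw : R < w.re) :
    petalFatouCoord f K m R (petalParam m c w) = fatouCoord (petalMap f K m c) R w := by
  rw [petalFatouCoord, invCoord_petalParam hR.multiplicity_ne_zero hR.coeff_ne_zero hc,
    petalLabel_petalParam hR.multiplicity_ne_zero hR.coeff_ne_zero hc
      (ne_zero_of_lt_re hR.nonneg hw)]

theorem hasDerivAt_comp_petalParam (hR : IsPetalRadius f K m R) (hc : c ^ m = K) (hw : R < w.re)
    {φ : ℂ → ℂ}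
    (hφ : HasDerivAt φ (deriv (petalFatouCoord f K m R) (petalParam m c w)) (petalParam m c w)) :
    HasDerivAt (φ ∘ petalParam m c) (deriv (fatouCoord (petalMap f K m c) R) w) w := by
  have hmem := hR.petalParam_mem hc hw
  have hparam := (differentiableAt_petalParam (m := m) (c := c)
    (hR.nonneg.trans_lt hw)).hasDerivAt
  have hcoord := (hR.hasDerivAt_petalFatouCoord hmem).differentiableAt.hasDerivAt.comp w hparam
  have heq : petalFatouCoord f K m R ∘ petalParam m c =ᶠ[𝓝 w] fatouCoord (petalMap f K m c) R := by
    filter_upwards [(isOpen_lt continuous_const continuous_re).mem_nhds hw] with v hv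
    exact hR.petalFatouCoord_petalParam hc hv
  rw [← heq.deriv_eq, hcoord.deriv]
  exact hφ.comp w hparam

theorem exists_eq_add_natCast (hR : IsPetalRadius f K m R) {φ : ℂ → ℂ}
    (hφ : ∀ z ∈ petals K m R, HasDerivAt φ (deriv (petalFatouCoord f K m R) z) z)
    (hmap : ∀ z ∈ petals K m R, φ (f z) = φ z + 1) (t : ℂ) :
    ∃ n : ℕ, ∃ z ∈ petals K m R, φ z = t + n := by
  obtain ⟨c, hc⟩ :=
    IsAlgClosed.exists_pow_nat_eq K (Nat.pos_of_ne_zero hR.multiplicity_ne_zero)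
  obtain ⟨ε, hF⟩ := hR.exists_isNearTranslation hc
  have hderiv (w : ℂ) (hw : R < w.re) :=
    hR.hasDerivAt_comp_petalParam hc hw (hφ _ (hR.petalParam_mem hc hw))
  obtain ⟨n, w, hw, hφw⟩ := hF.exists_eq_add_natCast (h := φ ∘ petalParam m c)
    (fun w hw ↦ (hderiv w hw).differentiableAt)
    (fun w hw ↦ (hderiv w hw).deriv ▸ hF.norm_deriv_fatouCoord_sub_one_le hw)
    (fun w hw ↦ by
      rw [Function.comp_apply, hR.petalParam_petalMap hc hw, hmap _ (hR.petalParam_mem hc hw),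
        Function.comp_apply]) t
  exact ⟨n, petalParam m c w, hR.petalParam_mem hc hw, hφw⟩

end IsPetalRadius

/-! ### Extension to the parabolic basin -/

section ParabolicBasin

variable {f : ℂ → ℂ} {z : ℂ}

theorem map_mem_parabolicBasin_iff : f z ∈ parabolicBasin f ↔ z ∈ parabolicBasin f :=
  tendsto_add_atTop_iff_nat (f := fun n ↦ f^[n] z) 1

theorem iterate_mem_parabolicBasin_iff (n : ℕ) :
    f^[n] z ∈ parabolicBasin f ↔ z ∈ parabolicBasin f := by
  induction n with
  | zero => rfl
  | succ n ih => rw [Function.iterate_succ_apply', map_mem_parabolicBasin_iff, ih]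

theorem mem_parabolicBasin_iff (hf₀ : f 0 = 0) :
    z ∈ parabolicBasin f ↔ Tendsto (fun n ↦ f^[n] z) atTop (𝓝 0) ∧ ∀ n, f^[n] z ≠ 0 := by
  rw [parabolicBasin, mem_ofPred_eq, tendsto_nhdsWithin_iff]
  refine and_congr_right fun _ ↦ ⟨fun hne n hn ↦ ?_, Eventually.of_forall⟩
  obtain ⟨k, hk, hnk⟩ := (hne.and (eventually_ge_atTop n)).exists
  rw [← Nat.sub_add_cancel hnk, Function.iterate_add_apply, hn,
    Function.iterate_fixed hf₀] at hk
  exact hk rfl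

theorem parabolicBasin_iterate (hf : Tendsto f (𝓝[≠] 0) (𝓝[≠] 0)) {q : ℕ} (hq : q ≠ 0) :
    parabolicBasin f^[q] = parabolicBasin f := by
  ext z
  simp only [parabolicBasin, mem_ofPred_eq, ← Function.iterate_mul]
  constructor
  · intro hz U hU
    have hresidues : ∀ᶠ n in atTop, ∀ r ∈ Finset.range q, f^[r] (f^[q * n] z) ∈ U :=
      (eventually_all_finset _).2 fun r _ ↦ ((hf.iterate r).comp hz).eventually_mem hU
    rw [mem_map]
    filter_upwards [(Nat.tendsto_div_const_atTop hq).eventually hresidues] with n hn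
    have hmod := hn (n % q) (Finset.mem_range.2 (Nat.mod_lt _ (Nat.pos_of_ne_zero hq)))
    rwa [← Function.iterate_add_apply, Nat.mod_add_div] at hmod
  · exact fun hz ↦ hz.comp (tendsto_id.const_mul_atTop' (Nat.pos_of_ne_zero hq))

end ParabolicBasin

/-- The extension of `petalFatouCoord` to the parabolic basin by the functional equation
`φ (f z) = φ z + 1`. The sequence in the limit is constant once the orbit of `z` has entered the
petals. -/
noncomputable def extendedFatouCoord (f : ℂ → ℂ) (K : ℂ) (m : ℕ) (R : ℝ) (z : ℂ) : ℂ :=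
  limUnder atTop fun n : ℕ ↦ petalFatouCoord f K m R (f^[n] z) - n

theorem deriv_invCoord_comp {P : ℂ → ℂ} {K y : ℂ} {m : ℕ} (hP : DifferentiableAt ℂ P y)
    (hy : y ≠ 0) (hPy : P y ≠ 0) :
    deriv (invCoord K m ∘ P) y =
      deriv P y * (y / P y) ^ (m + 1) * deriv (invCoord K m) y := by
  rw [((hasDerivAt_invCoord hPy).comp y hP.hasDerivAt).deriv, (hasDerivAt_invCoord hy).deriv,
    div_pow]
  field_simp

namespace IsPetalRadius

variable {f : ℂ → ℂ} {K z : ℂ} {m N : ℕ} {R : ℝ}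

theorem petalFatouCoord_iterate (hR : IsPetalRadius f K m R) (hz : z ∈ petals K m R) (n : ℕ) :
    petalFatouCoord f K m R (f^[n] z) = petalFatouCoord f K m R z + n := by
  induction n with
  | zero => simp
  | succ n ih =>
    rw [Function.iterate_succ_apply', hR.petalFatouCoord_map (hR.mapsTo.iterate n hz), ih,
      Nat.cast_succ, add_assoc]

theorem extendedFatouCoord_eq (hR : IsPetalRadius f K m R) (hz : f^[N] z ∈ petals K m R) :
    extendedFatouCoord f K m R z = petalFatouCoord f K m R (f^[N] z) - N := by
  refine (tendsto_const_nhds.congr' ?_).limUnder_eq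
  filter_upwards [eventually_ge_atTop N] with n hn
  obtain ⟨k, rfl⟩ := Nat.exists_eq_add_of_le' hn
  rw [Function.iterate_add_apply, hR.petalFatouCoord_iterate hz]
  push_cast
  ring

theorem extendedFatouCoord_map (hR : IsPetalRadius f K m R) (hz : z ∈ parabolicBasin f) :
    extendedFatouCoord f K m R (f z) = extendedFatouCoord f K m R z + 1 := by
  obtain ⟨N, hN⟩ := (hR.eventually_iterate_mem hz).exists
  have hfN : f^[N] (f z) = f (f^[N] z) := (Function.iterate_succ_apply f N z).symm.trans
    (Function.iterate_succ_apply' f N z)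
  rw [hR.extendedFatouCoord_eq hN, hR.extendedFatouCoord_eq (hfN ▸ hR.mapsTo hN), hfN,
    hR.petalFatouCoord_map hN]
  ring

theorem hasDerivAt_extendedFatouCoord (hR : IsPetalRadius f K m R) (hf : Differentiable ℂ f)
    (hz : f^[N] z ∈ petals K m R) :
    HasDerivAt (extendedFatouCoord f K m R)
      (deriv (petalFatouCoord f K m R) (f^[N] z) * deriv f^[N] z) z := by
  refine (((hR.hasDerivAt_petalFatouCoord hz).differentiableAt.hasDerivAt.comp z
    (hf.iterate N z).hasDerivAt).sub_const (N : ℂ)).congr_of_eventuallyEq ?_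
  filter_upwards [(hf.continuous.iterate N).continuousAt.eventually_mem
    ((isOpen_petals hR.multiplicity_ne_zero hR.nonneg).mem_nhds hz)] with y hy
  exact hR.extendedFatouCoord_eq hy

theorem differentiableAt_extendedFatouCoord (hR : IsPetalRadius f K m R)
    (hf : Differentiable ℂ f) (hz : z ∈ parabolicBasin f) :
    DifferentiableAt ℂ (extendedFatouCoord f K m R) z :=
  let ⟨_, hN⟩ := (hR.eventually_iterate_mem hz).exists
  (hR.hasDerivAt_extendedFatouCoord hf hN).differentiableAt

theorem deriv_extendedFatouCoord_of_mem_petals (hR : IsPetalRadius f K m R)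
    (hf : Differentiable ℂ f) (hz : z ∈ petals K m R) :
    deriv (extendedFatouCoord f K m R) z = deriv (petalFatouCoord f K m R) z := by
  rw [(hR.hasDerivAt_extendedFatouCoord (N := 0) hf hz).deriv, Function.iterate_zero, deriv_id,
    mul_one, id]

theorem deriv_extendedFatouCoord_eq_zero_iff (hR : IsPetalRadius f K m R)
    (hf : Differentiable ℂ f) (hz : z ∈ parabolicBasin f) :
    deriv (extendedFatouCoord f K m R) z = 0 ↔ ∀ᶠ n in atTop, deriv f^[n] z = 0 := by
  have hiff {n : ℕ} (hn : f^[n] z ∈ petals K m R) :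
      deriv (extendedFatouCoord f K m R) z = 0 ↔ deriv f^[n] z = 0 := by
    rw [(hR.hasDerivAt_extendedFatouCoord hf hn).deriv, mul_eq_zero,
      or_iff_right (hR.deriv_petalFatouCoord_ne_zero hn)]
  have hmem := hR.eventually_iterate_mem hz
  refine ⟨fun hzero ↦ hmem.mono fun n hn ↦ (hiff hn).1 hzero, fun hzero ↦ ?_⟩
  obtain ⟨n, hn, hzn⟩ := (hmem.and hzero).exists
  exact (hiff hn).2 hzn

theorem tendsto_deriv_invCoord_iterate_of_mem_parabolicBasin (hR : IsPetalRadius f K m R)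
    (hf : Differentiable ℂ f) (hz : z ∈ parabolicBasin f) :
    Tendsto (fun n ↦ deriv (fun y ↦ invCoord K m (f^[n] y)) z) atTop
      (𝓝 (deriv (extendedFatouCoord f K m R) z)) := by
  obtain ⟨N, hN⟩ := (hR.eventually_iterate_mem hz).exists
  rw [(hR.hasDerivAt_extendedFatouCoord hf hN).deriv, ← tendsto_add_atTop_iff_nat N]
  refine ((hR.tendsto_deriv_invCoord_iterate hN).mul_const _).congr fun n ↦ ?_
  have hdiff : DifferentiableAt ℂ (fun y ↦ invCoord K m (f^[n] y)) (f^[N] z) :=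
    (hasDerivAt_invCoord (hR.ne_zero (hR.mapsTo.iterate n hN))).differentiableAt.comp _
      (hf.iterate n _)
  rw [← deriv_comp z hdiff (hf.iterate N z)]
  simp only [Function.comp_def, Function.iterate_add_apply]

-- The derivative of the coordinate is the limit of the derivatives of `invCoord K m ∘ f^[n]`, and
-- the hypothesis on `P` says that these are asymptotically invariant under `P`.
theorem deriv_extendedFatouCoord_comp (hR : IsPetalRadius f K m R) {P : ℂ → ℂ}
    (hf : Differentiable ℂ f) (hP : Differentiable ℂ P) (hcomm : Function.Commute f P)
    (hasymp : Tendsto (fun y ↦ deriv P y * (y / P y) ^ (m + 1)) (𝓝[≠] 0) (𝓝 1))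
    (hz : z ∈ parabolicBasin f) (hPz : P z ∈ parabolicBasin f) :
    deriv (extendedFatouCoord f K m R ∘ P) z = deriv (extendedFatouCoord f K m R) z := by
  rw [deriv_comp z (hR.differentiableAt_extendedFatouCoord hf hPz) (hP z)]
  refine tendsto_nhds_unique
    ((hR.tendsto_deriv_invCoord_iterate_of_mem_parabolicBasin hf hPz).mul_const _) ?_
  rw [← one_mul (deriv (extendedFatouCoord f K m R) z)]
  refine ((hasymp.comp hz).mul
    (hR.tendsto_deriv_invCoord_iterate_of_mem_parabolicBasin hf hz)).congr' ?_
  filter_upwards [hz.eventually eventually_mem_nhdsWithin,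
    hPz.eventually eventually_mem_nhdsWithin] with n (hzn : f^[n] z ≠ 0) (hPzn : f^[n] (P z) ≠ 0)
  have hswap : f^[n] ∘ P = P ∘ f^[n] := funext (hcomm.iterate_left n)
  have hPzn' : P (f^[n] z) ≠ 0 := by rwa [← hcomm.iterate_left n z]
  have hinv {y : ℂ} (hy : y ≠ 0) : DifferentiableAt ℂ (invCoord K m) y :=
    (hasDerivAt_invCoord hy).differentiableAt
  have hfn := hf.iterate n
  calc deriv P (f^[n] z) * (f^[n] z / P (f^[n] z)) ^ (m + 1) *
        deriv (invCoord K m ∘ f^[n]) z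
      = deriv (invCoord K m ∘ P) (f^[n] z) * deriv f^[n] z := by
        rw [deriv_comp z (hinv hzn) (hfn z), deriv_invCoord_comp (hP _) hzn hPzn', mul_assoc,
          mul_assoc, mul_assoc]
    _ = deriv (invCoord K m ∘ P ∘ f^[n]) z := by
        rw [← deriv_comp z ((hinv hPzn').comp _ (hP _)) (hfn z), Function.comp_assoc]
    _ = deriv (invCoord K m ∘ f^[n]) (P z) * deriv P z := by
        rw [← hswap, ← deriv_comp z ((hinv hPzn).comp _ (hfn _)) (hP z), Function.comp_assoc]

end IsPetalRadius

/-! ### Iterative roots of parabolic germs -/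

theorem tendsto_div_self_of_hasDerivAt {P : ℂ → ℂ} {μ : ℂ} (hP : HasDerivAt P μ 0)
    (hP₀ : P 0 = 0) : Tendsto (fun z ↦ P z / z) (𝓝[≠] 0) (𝓝 μ) := by
  simpa only [slope_fun_def_field, hP₀, sub_zero] using hasDerivAt_iff_tendsto_slope.1 hP

namespace IsParabolicGerm

variable {f P : ℂ → ℂ} {m : ℕ} {K : ℂ}

theorem neg_one_div_ne_zero (hf : IsParabolicGerm f m K) : -1 / (m * K) ≠ 0 :=
  div_ne_zero (neg_ne_zero.2 one_ne_zero)
    (mul_ne_zero (Nat.cast_ne_zero.2 hf.multiplicity_ne_zero) hf.coeff_ne_zero)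

theorem tendsto_sub_self_div_pow (hf : IsParabolicGerm f m K) :
    Tendsto (fun z ↦ (f z - z) / z ^ (m + 1)) (𝓝[≠] 0) (𝓝 (-1 / (m * K))) := by
  obtain ⟨g, hg, hg₀, hfg⟩ := hf.exists_eq_mul
  rw [← hg₀]
  refine (hg.continuousAt.tendsto.mono_left nhdsWithin_le_nhds).congr' ?_
  filter_upwards [nhdsWithin_le_nhds hfg, self_mem_nhdsWithin] with z hfz (hz : z ≠ 0)
  rw [hfz]
  field_simp
  ring

theorem hasDerivAt_zero (hf : IsParabolicGerm f m K) : HasDerivAt f 1 0 := by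
  obtain ⟨g, hg, -, hfg⟩ := hf.exists_eq_mul
  have hfactor : DifferentiableAt ℂ (fun z ↦ 1 + z ^ m * g z) 0 :=
    ((differentiableAt_id.pow m).mul hg.differentiableAt).const_add 1
  refine (((hasDerivAt_id' (0 : ℂ)).mul hfactor.hasDerivAt).congr_of_eventuallyEq
    hfg).congr_deriv ?_
  simp [hf.multiplicity_ne_zero]

theorem tendsto_map_sub_map_div (hf : IsParabolicGerm f m K) (hP : AnalyticAt ℂ P 0) :
    Tendsto (fun z ↦ (P (f z) - P z) / (f z - z)) (𝓝[≠] 0) (𝓝 (deriv P 0)) := by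
  obtain ⟨g, -, -, hfg⟩ := hf.exists_eq_mul
  have hpair : Tendsto (fun z ↦ (f z, z)) (𝓝[≠] 0) (𝓝 ((0 : ℂ), (0 : ℂ))) := by
    have hf₀ : f 0 = 0 := by simpa using hfg.self_of_nhds
    have hcont := (hf.hasDerivAt_zero.continuousAt.prodMk continuousAt_id).tendsto
    rw [hf₀] at hcont
    exact hcont.mono_left nhdsWithin_le_nhds
  have hlim := (hP.hasStrictDerivAt.hasStrictFDerivAt.isLittleO.comp_tendsto
    hpair).tendsto_div_nhds_zero.add_const (deriv P 0)
  rw [zero_add] at hlim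
  refine hlim.congr' ?_
  filter_upwards [hf.tendsto_sub_self_div_pow.eventually_ne hf.neg_one_div_ne_zero] with z hz
  have hfz : f z - z ≠ 0 := (div_ne_zero_iff.1 hz).1
  simp only [Function.comp_apply, ContinuousLinearMap.toSpanSingleton_apply, smul_eq_mul]
  field_simp
  ring

-- Compare the leading terms of `f (P z) - P z = P (f z) - P z`.
theorem deriv_pow_eq_one_of_commute (hf : IsParabolicGerm f m K) (hP : AnalyticAt ℂ P 0)
    (hP₀ : P 0 = 0) (hP' : deriv P 0 ≠ 0) (hcomm : Function.Commute f P) :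
    deriv P 0 ^ m = 1 := by
  have hderiv := hP.differentiableAt.hasDerivAt
  have hPne : Tendsto P (𝓝[≠] 0) (𝓝[≠] 0) := by
    simpa only [hP₀] using hderiv.tendsto_nhdsNE hP'
  have hlim := ((hf.tendsto_sub_self_div_pow.comp hPne).mul
    ((tendsto_div_self_of_hasDerivAt hderiv hP₀).pow (m + 1))).div
    hf.tendsto_sub_self_div_pow hf.neg_one_div_ne_zero
  rw [mul_div_cancel_left₀ _ hf.neg_one_div_ne_zero] at hlim
  have hpow : deriv P 0 ^ (m + 1) = deriv P 0 := by
    refine tendsto_nhds_unique (hlim.congr' ?_) (hf.tendsto_map_sub_map_div hP)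
    filter_upwards [self_mem_nhdsWithin, hPne.eventually eventually_mem_nhdsWithin]
      with z (hz : z ≠ 0) (hPz : P z ≠ 0)
    simp only [Pi.div_apply, Function.comp_apply, ← hcomm z, div_pow]
    field_simp
  exact mul_right_cancel₀ hP' (by rw [← pow_succ, hpow, one_mul])

theorem tendsto_deriv_mul_div_pow (hf : IsParabolicGerm f m K) (hP : AnalyticAt ℂ P 0)
    (hP₀ : P 0 = 0) (hP' : deriv P 0 ≠ 0) (hcomm : Function.Commute f P) :
    Tendsto (fun z ↦ deriv P z * (z / P z) ^ (m + 1)) (𝓝[≠] 0) (𝓝 1) := by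
  have hdiv := (tendsto_div_self_of_hasDerivAt hP.differentiableAt.hasDerivAt hP₀).inv₀ hP'
  have hlim := (hP.deriv.continuousAt.tendsto.mono_left nhdsWithin_le_nhds).mul (hdiv.pow (m + 1))
  rw [inv_pow, pow_succ, hf.deriv_pow_eq_one_of_commute hP hP₀ hP' hcomm, one_mul,
    mul_inv_cancel₀ hP'] at hlim
  simpa only [inv_div] using hlim

end IsParabolicGerm

theorem deriv_iterate_eq_zero_iff {𝕜 : Type*} [NontriviallyNormedField 𝕜] {P : 𝕜 → 𝕜}
    (hP : Differentiable 𝕜 P) (n : ℕ) (z : 𝕜) :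
    deriv P^[n] z = 0 ↔ ∃ k < n, deriv P (P^[k] z) = 0 := by
  induction n with
  | zero => simp
  | succ n ih =>
    rw [Function.iterate_succ', deriv_comp z (hP _) (hP.iterate n z), mul_eq_zero, ih, or_comm]
    simp only [Nat.exists_lt_succ_right]

section BirkhoffAverage

variable {𝕜 : Type*} [NontriviallyNormedField 𝕜] {P ψ : 𝕜 → 𝕜} {S : Set 𝕜} {z : 𝕜}

theorem hasDerivAt_comp_iterate_of_deriv_comp_eq (hP : Differentiable 𝕜 P) (hS : MapsTo P S S)
    (hψ : ∀ z ∈ S, DifferentiableAt 𝕜 ψ z) (hinv : ∀ z ∈ S, deriv (ψ ∘ P) z = deriv ψ z)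
    (n : ℕ) (hz : z ∈ S) : HasDerivAt (fun y ↦ ψ (P^[n] y)) (deriv ψ z) z := by
  induction n generalizing z with
  | zero => exact (hψ z hz).hasDerivAt
  | succ n ih =>
    rw [← hinv z hz, deriv_comp z (hψ _ (hS hz)) (hP z)]
    exact (ih (hS hz)).comp z (hP z).hasDerivAt

theorem hasDerivAt_birkhoffAverage_of_deriv_comp_eq [CharZero 𝕜] (hP : Differentiable 𝕜 P)
    (hS : MapsTo P S S) (hψ : ∀ z ∈ S, DifferentiableAt 𝕜 ψ z)
    (hinv : ∀ z ∈ S, deriv (ψ ∘ P) z = deriv ψ z) {n : ℕ} (hn : n ≠ 0) (hz : z ∈ S) :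
    HasDerivAt (birkhoffAverage 𝕜 P ψ n) (deriv ψ z) z := by
  have hsum := (HasDerivAt.fun_sum fun k (_ : k ∈ Finset.range n) ↦
    hasDerivAt_comp_iterate_of_deriv_comp_eq hP hS hψ hinv k hz).const_smul (n : 𝕜)⁻¹
  refine hsum.congr_deriv ?_
  rw [Finset.sum_const, Finset.card_range, nsmul_eq_mul, smul_eq_mul,
    inv_mul_cancel_left₀ (Nat.cast_ne_zero.2 hn)]

end BirkhoffAverage

theorem apply_iterate_eq_natCast_mul_add {α R : Type*} [Semiring R] {P : α → α} {φ : α → R}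
    {S : Set α} {c : R} (hS : MapsTo P S S) (hφ : ∀ z ∈ S, φ (P z) = c + φ z) (n : ℕ) {z : α}
    (hz : z ∈ S) : φ (P^[n] z) = n * c + φ z := by
  induction n with
  | zero => simp
  | succ n ih =>
    rw [Function.iterate_succ_apply', hφ _ (hS.iterate n hz), ih, Nat.cast_succ, ← add_assoc,
      add_one_mul, add_comm c]

/-- `φ` is an extended Fatou coordinate of `P` at its parabolic fixed point `0`, whose multiplier is
a `q`-th root of unity: `φ` is holomorphic on the parabolic basin, maps it onto `ℂ`, conjugates `P`
to the translation by `1 / q`, and its critical points are the iterated preimages of the critical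
points of `P`. Values of `φ` outside the basin are irrelevant. -/
structure IsExtendedFatouCoordinate (P : ℂ → ℂ) (q : ℕ) (φ : ℂ → ℂ) : Prop where
  differentiableAt : ∀ z ∈ parabolicBasin P, DifferentiableAt ℂ φ z
  exists_eq : ∀ w, ∃ z ∈ parabolicBasin P, φ z = w
  map : ∀ z ∈ parabolicBasin P, φ (P z) = 1 / q + φ z
  deriv_eq_zero_iff : ∀ z ∈ parabolicBasin P, deriv φ z = 0 ↔ ∃ n, deriv P (P^[n] z) = 0

namespace IsExtendedFatouCoordinate

variable {P φ : ℂ → ℂ} {q : ℕ}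

theorem sub_const (hφ : IsExtendedFatouCoordinate P q φ) (c : ℂ) :
    IsExtendedFatouCoordinate P q fun z ↦ φ z - c where
  differentiableAt z hz := (hφ.differentiableAt z hz).sub_const c
  exists_eq w := by simpa only [sub_eq_iff_eq_add] using hφ.exists_eq (w + c)
  map z hz := by rw [hφ.map z hz, add_sub_assoc]
  deriv_eq_zero_iff z hz := by rw [deriv_sub_const, hφ.deriv_eq_zero_iff z hz]

theorem map_iterate (hφ : IsExtendedFatouCoordinate P q φ) (hq : q ≠ 0) {z : ℂ}
    (hz : z ∈ parabolicBasin P) : φ (P^[q] z) = 1 + φ z := by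
  rw [apply_iterate_eq_natCast_mul_add (fun _ ↦ map_mem_parabolicBasin_iff.2) hφ.map q hz,
    mul_one_div_cancel (Nat.cast_ne_zero.2 hq)]

end IsExtendedFatouCoordinate

section Root

variable {P ψ φ : ℂ → ℂ} {q m : ℕ} {K z : ℂ} {R : ℝ}

theorem IsParabolicGerm.deriv_root_ne_zero (hf : IsParabolicGerm P^[q] m K)
    (hP : DifferentiableAt ℂ P 0) (hP₀ : P 0 = 0) (hq : q ≠ 0) : deriv P 0 ≠ 0 := by
  have hpow := (hP.hasDerivAt.iterate 0 hP₀ q).unique hf.hasDerivAt_zero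
  exact fun hzero ↦ zero_ne_one (by rwa [hzero, zero_pow hq] at hpow)

theorem IsParabolicGerm.parabolicBasin_root (hf : IsParabolicGerm P^[q] m K)
    (hP : DifferentiableAt ℂ P 0) (hP₀ : P 0 = 0) (hq : q ≠ 0) :
    parabolicBasin P^[q] = parabolicBasin P := by
  refine parabolicBasin_iterate ?_ hq
  simpa only [hP₀] using hP.hasDerivAt.tendsto_nhdsNE (hf.deriv_root_ne_zero hP hP₀ hq)

theorem birkhoffAverage_map_eq (hψ : ∀ z ∈ parabolicBasin P, ψ (P^[q] z) = ψ z + 1)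
    (hz : z ∈ parabolicBasin P) :
    birkhoffAverage ℂ P ψ q (P z) = 1 / q + birkhoffAverage ℂ P ψ q z := by
  rw [← sub_eq_iff_eq_add, birkhoffAverage_apply_sub_birkhoffAverage, hψ z hz, add_sub_cancel_left,
    smul_eq_mul, mul_one, one_div]

theorem IsPetalRadius.exists_eq_of_surjective (hR : IsPetalRadius P^[q] K m R) (hq : q ≠ 0)
    (hsurj : Function.Surjective P) (hbasin : parabolicBasin P^[q] = parabolicBasin P)
    (hφ : ∀ z ∈ petals K m R, HasDerivAt φ (deriv (petalFatouCoord P^[q] K m R) z) z)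
    (hmap : ∀ z ∈ parabolicBasin P, φ (P z) = 1 / q + φ z) (w : ℂ) :
    ∃ z ∈ parabolicBasin P, φ z = w := by
  have hiter (n : ℕ) {z : ℂ} (hz : z ∈ parabolicBasin P) : φ (P^[q * n] z) = n + φ z := by
    have hq' : (q : ℂ) ≠ 0 := Nat.cast_ne_zero.2 hq
    rw [apply_iterate_eq_natCast_mul_add (fun _ ↦ map_mem_parabolicBasin_iff.2) hmap _ hz]
    push_cast
    field_simp
  have hsub : petals K m R ⊆ parabolicBasin P := hbasin ▸ hR.petals_subset_parabolicBasin
  obtain ⟨n, z, hz, hzw⟩ := hR.exists_eq_add_natCast hφ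
    (fun z hz ↦ by simpa [add_comm] using hiter 1 (hsub hz)) w
  obtain ⟨y, rfl⟩ := hsurj.iterate (q * n) z
  have hy : y ∈ parabolicBasin P := (iterate_mem_parabolicBasin_iff _).1 (hsub hz)
  exact ⟨y, hy, add_left_cancel ((hiter n hy).symm.trans (hzw.trans (add_comm _ _)))⟩

theorem eventually_deriv_iterate_eq_zero_iff (hP : Differentiable ℂ P) (hq : q ≠ 0) (z : ℂ) :
    (∀ᶠ n in atTop, deriv (P^[q])^[n] z = 0) ↔ ∃ k, deriv P (P^[k] z) = 0 := by
  simp only [← Function.iterate_mul, deriv_iterate_eq_zero_iff hP]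
  refine ⟨fun h ↦ let ⟨_, k, _, hk⟩ := h.exists; ⟨k, hk⟩, fun ⟨k, hk⟩ ↦ ?_⟩
  filter_upwards [eventually_gt_atTop k] with n hn
  exact ⟨k, hn.trans_le (Nat.le_mul_of_pos_left n (Nat.pos_of_ne_zero hq)), hk⟩

-- The coordinate of `P^[q]` need not transform well under `P`, but its derivative does, so
-- averaging over `q` iterates of `P` produces the functional equation without changing the
-- derivative.
theorem exists_isExtendedFatouCoordinate (hP : Differentiable ℂ P)
    (hsurj : Function.Surjective P) (hP₀ : P 0 = 0) (hq : q ≠ 0)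
    (hf : IsParabolicGerm P^[q] m K) : ∃ φ, IsExtendedFatouCoordinate P q φ := by
  obtain ⟨R, hR⟩ := hf.eventually_isPetalRadius.exists
  have hbasin := hf.parabolicBasin_root (hP 0) hP₀ hq
  have hPq := hP.iterate q
  have hasymp := hf.tendsto_deriv_mul_div_pow (hP.analyticAt 0) hP₀
    (hf.deriv_root_ne_zero (hP 0) hP₀ hq) ((Function.Commute.refl P).iterate_left q)
  let ψ := extendedFatouCoord P^[q] K m R
  have hmaps : MapsTo P (parabolicBasin P) (parabolicBasin P) :=
    fun _ ↦ map_mem_parabolicBasin_iff.2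
  have hdiff : ∀ z ∈ parabolicBasin P, DifferentiableAt ℂ ψ z := fun z hz ↦
    hR.differentiableAt_extendedFatouCoord hPq (hbasin ▸ hz)
  have hinv : ∀ z ∈ parabolicBasin P, deriv (ψ ∘ P) z = deriv ψ z := fun z hz ↦
    hR.deriv_extendedFatouCoord_comp hPq hP ((Function.Commute.refl P).iterate_left q) hasymp
      (hbasin ▸ hz) (hbasin ▸ hmaps hz)
  have hderiv (z : ℂ) (hz : z ∈ parabolicBasin P) :
      HasDerivAt (birkhoffAverage ℂ P ψ q) (deriv ψ z) z :=
    hasDerivAt_birkhoffAverage_of_deriv_comp_eq hP hmaps hdiff hinv hq hz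
  have hmap (z : ℂ) (hz : z ∈ parabolicBasin P) :=
    birkhoffAverage_map_eq (fun y hy ↦ hR.extendedFatouCoord_map (hbasin ▸ hy)) hz
  refine ⟨birkhoffAverage ℂ P ψ q, fun z hz ↦ (hderiv z hz).differentiableAt,
    hR.exists_eq_of_surjective hq hsurj hbasin (fun z hz ↦ ?_) hmap, hmap, fun z hz ↦ ?_⟩
  · rw [← hR.deriv_extendedFatouCoord_of_mem_petals hPq hz]
    exact hderiv z (hbasin ▸ hR.petals_subset_parabolicBasin hz)
  · rw [(hderiv z hz).deriv, hR.deriv_extendedFatouCoord_eq_zero_iff hPq (hbasin ▸ hz),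
      eventually_deriv_iterate_eq_zero_iff hP hq]

end Root

theorem exists_isParabolicGerm {f : ℂ → ℂ} (hf : AnalyticAt ℂ f 0) (hf₀ : f 0 = 0)
    (hf' : deriv f 0 = 1) (hid : ¬ f =ᶠ[𝓝 0] id) : ∃ m K, IsParabolicGerm f m K := by
  obtain ⟨n, g, hg, hg₀, hfg⟩ :=
    (hf.fun_sub analyticAt_id).exists_eventuallyEq_pow_smul_nonzero_iff.2
      fun h ↦ hid (h.mono fun z hz ↦ sub_eq_zero.1 hz)
  simp only [id, sub_zero, smul_eq_mul] at hfg
  have hderiv : HasDerivAt (fun z ↦ z ^ n * g z) 0 0 := by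
    refine ((hf.differentiableAt.hasDerivAt.fun_sub (hasDerivAt_id' 0)).congr_of_eventuallyEq
      (EventuallyEq.symm hfg)).congr_deriv ?_
    rw [hf', sub_self]
  have hn : 2 ≤ n := by
    by_contra! hlt
    interval_cases n
    · exact hg₀ (by simpa [hf₀] using hfg.self_of_nhds.symm)
    · refine hg₀ ?_
      simpa using ((hasDerivAt_id' (0 : ℂ)).fun_mul hg.differentiableAt.hasDerivAt).unique
        (by simpa using hderiv)
  obtain ⟨m, rfl⟩ := Nat.exists_eq_add_of_le' hn
  have hm : ((m + 1 : ℕ) : ℂ) ≠ 0 := Nat.cast_ne_zero.2 m.succ_ne_zero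
  refine ⟨m + 1, -1 / ((m + 1 : ℕ) * g 0), m.succ_ne_zero,
    div_ne_zero (neg_ne_zero.2 one_ne_zero) (mul_ne_zero hm hg₀), g, hg, by field_simp,
    hfg.mono fun z hz ↦ ?_⟩
  linear_combination hz

theorem extended_fatou_coordinate_exists_general {P : ℂ → ℂ} {q : ℕ} (hP : Differentiable ℂ P)
    (hsurj : Function.Surjective P) (hP₀ : P 0 = 0) (hq : q ≠ 0) (hmult : deriv P 0 ^ q = 1)
    (hid : P^[q] ≠ id) (z₀ : ℂ) : ∃ φ, IsExtendedFatouCoordinate P q φ ∧ φ z₀ = 0 := by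
  have hgerm_ne_id : ¬ P^[q] =ᶠ[𝓝 0] id := fun h ↦ hid <| AnalyticOnNhd.eq_of_eventuallyEq
    (fun z _ ↦ (hP.iterate q).analyticAt z) (fun _ _ ↦ analyticAt_id) h
  obtain ⟨m, K, hgerm⟩ := exists_isParabolicGerm ((hP.iterate q).analyticAt 0)
    (Function.iterate_fixed hP₀ q) (((hP 0).hasDerivAt.iterate 0 hP₀ q).deriv.trans hmult)
    hgerm_ne_id
  obtain ⟨φ, hφ⟩ := exists_isExtendedFatouCoordinate hP hsurj hP₀ hq hgerm
  exact ⟨_, hφ.sub_const (φ z₀), sub_self _⟩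

/-! ### The quadratic family -/

section QuadraticFamily

variable (ω : ℂ)

theorem hasDerivAt_Pq (z : ℂ) : HasDerivAt (Pq ω) (ω + 2 * z) z := by
  refine (((hasDerivAt_id' z).const_mul ω).fun_add (hasDerivAt_pow 2 z)).congr_deriv ?_
  norm_num

theorem deriv_Pq_eq_zero_iff (z : ℂ) : deriv (Pq ω) z = 0 ↔ z = -ω / 2 := by
  rw [(hasDerivAt_Pq ω z).deriv, eq_div_iff two_ne_zero, eq_neg_iff_add_eq_zero, add_comm,
    mul_comm]

theorem Pq_zero : Pq ω 0 = 0 := by simp [Pq]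

theorem Pq_surjective : Function.Surjective (Pq ω) := by
  intro y
  obtain ⟨t, ht⟩ := IsAlgClosed.exists_pow_nat_eq (y + ω ^ 2 / 4) two_pos
  refine ⟨t - ω / 2, ?_⟩
  rw [Pq]
  linear_combination ht

theorem basin_eq_parabolicBasin : basin ω = parabolicBasin (Pq ω) := by
  ext z
  rw [mem_parabolicBasin_iff (Pq_zero ω)]
  exact and_congr_right fun _ ↦ not_exists

variable {ω}

theorem Pq_iterate_ne_id (hω : ω ≠ 0) {q : ℕ} (hq : q ≠ 0) : (Pq ω)^[q] ≠ id := by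
  intro h
  have hinj : Function.Injective (Pq ω) := by
    obtain ⟨k, rfl⟩ := Nat.exists_eq_succ_of_ne_zero hq
    rw [Function.iterate_succ] at h
    exact Function.Injective.of_comp (h ▸ Function.injective_id)
  exact hω (neg_eq_zero.1 (hinj (by simp [Pq, sq])))

end QuadraticFamily

/-- There exists an extended Fatou coordinate `φ` for `P_ω`:
holomorphic on `Λ_ω`, surjective onto `ℂ`, satisfying `φ(P_ω z) = 1/q + φ z`
(hence `φ(P_ω^[q] z) = 1 + φ z`), normalized by `φ(-ω/2) = 0`, and whose
critical points are exactly the backward orbit of the critical point `-ω/2`. -/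
theorem extended_fatou_coordinate_exists
    (p q : ℕ) (hq : 2 ≤ q) (hp0 : 0 < p) (hpq : p < q) (hcop : Nat.Coprime p q)
    (ω : ℂ) (hω : ω = Complex.exp (2 * Real.pi * Complex.I * (p : ℂ) / (q : ℂ))) :
    ∃ φ : ℂ → ℂ,
      (∀ z ∈ basin ω, DifferentiableAt ℂ φ z) ∧
      (∀ w : ℂ, ∃ z ∈ basin ω, φ z = w) ∧
      (∀ z ∈ basin ω, φ (Pq ω z) = 1 / (q : ℂ) + φ z) ∧
      (∀ z ∈ basin ω, φ ((Pq ω)^[q] z) = 1 + φ z) ∧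
      φ (-ω / 2) = 0 ∧
      (∀ z ∈ basin ω, (deriv φ z = 0 ↔ ∃ n : ℕ, (Pq ω)^[n] z = -ω / 2)) := by
  have hq₀ : q ≠ 0 := by omega
  have hωq : ω ^ q = 1 := by
    rw [hω, mul_div_assoc]
    exact (isPrimitiveRoot_exp_of_coprime p q hq₀ hcop).pow_eq_one
  have hω₀ : ω ≠ 0 := hω ▸ exp_ne_zero _
  have hmult : deriv (Pq ω) 0 ^ q = 1 := by simpa [(hasDerivAt_Pq ω 0).deriv] using hωq
  obtain ⟨φ, hφ, hφ₀⟩ := extended_fatou_coordinate_exists_general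
    (fun z ↦ (hasDerivAt_Pq ω z).differentiableAt) (Pq_surjective ω) (Pq_zero ω) hq₀ hmult
    (Pq_iterate_ne_id hω₀ hq₀) (-ω / 2)
  rw [basin_eq_parabolicBasin]
  exact ⟨φ, hφ.differentiableAt, hφ.exists_eq, hφ.map, fun z hz ↦ hφ.map_iterate hq₀ hz, hφ₀,
    fun z hz ↦ by simp only [hφ.deriv_eq_zero_iff z hz, deriv_Pq_eq_zero_iff]⟩
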